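/- Assume the LAG setup, and in addition: 𝓛 attains its infimum 𝓛* := inf 𝓛 and satisfies the Polyak–Łojasiewicz condition with constant μ > 0, i.e. 2μ(𝓛(θ) − 𝓛*) ≤ ‖∇𝓛(θ)‖² for all θ ∈ E; the condition number κ := L/μ satisfies D ≤ κ; the parameters are ξ_d = ξ for all d with 0 < ξ < 1/D, α = (1 − √(Dξ))/L, and β_d = (D − d + 1)ξ/(2α√(Dξ)) for d = 1, …, D. Then for every k ≥ 1, V^{k+1} ≤ (1 − (1 − √(Dξ))/κ) V^k, and consequently 𝓛(θ^K) − 𝓛* ≤ (1 − (1 − √(Dξ))/κ)^{K−1} V^1 for every K ≥ 1. -/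

import Mathlib

open Finset

/-- Descent lemma. -/
lemma lag_descent {n : ℕ} (f : EuclideanSpace ℝ (Fin n) → ℝ) (hf : Differentiable ℝ f)
    (L : ℝ)
    (hs : ∀ x y, ‖gradient f x - gradient f y‖ ≤ L * ‖x - y‖)
    (x v : EuclideanSpace ℝ (Fin n)) :
    f (x + v) ≤ f x + inner ℝ (gradient f x) v + L / 2 * ‖v‖ ^ 2 := by
  have hline : ∀ t : ℝ, HasDerivAt (fun t : ℝ => x + t • v) v t := by
    intro t
    simpa using ((hasDerivAt_id t).smul_const v).const_add x
  have hfd : ∀ t : ℝ, HasDerivAt (fun t : ℝ => f (x + t • v))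
      (inner ℝ (gradient f (x + t • v)) v) t := by
    intro t
    have h1 := (hf (x + t • v)).hasGradientAt.hasFDerivAt
    have h2 := h1.comp_hasDerivAt t (hline t)
    exact h2
  have hφ : ∀ t : ℝ, HasDerivAt
      (fun t : ℝ => f (x + t • v) - t * inner ℝ (gradient f x) v - L / 2 * ‖v‖ ^ 2 * t ^ 2)
      (inner ℝ (gradient f (x + t • v)) v - inner ℝ (gradient f x) v
        - L * ‖v‖ ^ 2 * t) t := by
    intro t
    have h := ((hfd t).sub ((hasDerivAt_id t).mul_const (inner ℝ (gradient f x) v))).sub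
      ((hasDerivAt_pow 2 t).const_mul (L / 2 * ‖v‖ ^ 2))
    refine HasDerivAt.congr_deriv h ?_
    push_cast
    ring
  have hanti : AntitoneOn
      (fun t : ℝ => f (x + t • v) - t * inner ℝ (gradient f x) v - L / 2 * ‖v‖ ^ 2 * t ^ 2)
      (Set.Icc 0 1) := by
    apply antitoneOn_of_deriv_nonpos (convex_Icc 0 1)
    · exact fun t _ => (hφ t).continuousAt.continuousWithinAt
    · exact fun t _ => (hφ t).differentiableAt.differentiableWithinAt
    · intro t ht
      rw [interior_Icc] at ht
      rw [(hφ t).deriv, ← inner_sub_left]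
      have h1 := real_inner_le_norm (gradient f (x + t • v) - gradient f x) v
      have h2 := hs (x + t • v) x
      rw [add_sub_cancel_left, norm_smul, Real.norm_eq_abs, abs_of_pos ht.1] at h2
      have h3 := mul_le_mul_of_nonneg_right h2 (norm_nonneg v)
      nlinarith
  have h := hanti (Set.left_mem_Icc.2 zero_le_one) (Set.right_mem_Icc.2 zero_le_one) zero_le_one
  simp only [one_smul, zero_smul, add_zero] at h
  linarith

lemma lag_sum_shift (F : ℕ → ℝ) (D : ℕ) :
    ∑ d ∈ Finset.Icc 1 D, F d = F 1 + ∑ d ∈ Finset.Icc 1 D, F (d + 1) - F (D + 1) := by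
  induction D with
  | zero => simp
  | succ D ih =>
    rw [Finset.sum_Icc_succ_top (by omega), Finset.sum_Icc_succ_top (by omega), ih]
    ring

lemma lag_gradient_sum {n M : ℕ} (Lf : Fin M → EuclideanSpace ℝ (Fin n) → ℝ)
    (hdiff : ∀ m, Differentiable ℝ (Lf m)) (x : EuclideanSpace ℝ (Fin n)) :
    gradient (fun z => ∑ m, Lf m z) x = ∑ m, gradient (Lf m) x := by
  apply HasGradientAt.gradient
  rw [hasGradientAt_iff_hasFDerivAt, map_sum]
  exact HasFDerivAt.fun_sum fun m _ => (hdiff m x).hasGradientAt.hasFDerivAt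

/-- Theorem 1 (strongly convex / PL case) with the concrete parameter choice (17):
linear convergence of the LAG Lyapunov function and of the optimality gap. -/
theorem lag_linear_convergence_pl {n : ℕ}
    (M D : ℕ) (hM : 1 ≤ M) (hD : 1 ≤ D)
    (Lf : Fin M → EuclideanSpace ℝ (Fin n) → ℝ)
    (hdiff : ∀ m, Differentiable ℝ (Lf m))
    (L : ℝ) (hL : 0 < L)
    (hsmooth : ∀ x y, ‖gradient (fun z => ∑ m, Lf m z) x
        - gradient (fun z => ∑ m, Lf m z) y‖ ≤ L * ‖x - y‖)
    (μ : ℝ) (hμ : 0 < μ)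
    (Lstar : ℝ)
    (hinf : ∀ x, Lstar ≤ ∑ m, Lf m x)
    (hattain : ∃ x, (∑ m, Lf m x) = Lstar)
    (hPL : ∀ x, 2 * μ * ((∑ m, Lf m x) - Lstar)
      ≤ ‖gradient (fun z => ∑ m, Lf m z) x‖ ^ 2)
    (hκ : (D : ℝ) ≤ L / μ)
    (ξ0 : ℝ) (hξ0 : 0 < ξ0) (hξ0D : ξ0 < 1 / (D : ℝ))
    (ξ : ℕ → ℝ) (hξ : ∀ d ∈ Finset.Icc 1 D, ξ d = ξ0)
    (α : ℝ) (hα : α = (1 - Real.sqrt ((D : ℝ) * ξ0)) / L)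
    (β : ℕ → ℝ)
    (hβ : ∀ d ∈ Finset.Icc 1 D,
      β d = ((D : ℝ) - (d : ℝ) + 1) * ξ0 / (2 * α * Real.sqrt ((D : ℝ) * ξ0)))
    (hβD : β (D + 1) = 0)
    (θ : ℤ → EuclideanSpace ℝ (Fin n))
    (hpast : ∀ k : ℤ, k ≤ 1 → θ k = θ 1)
    (Mc : ℤ → Finset (Fin M))
    (θhat : ℤ → Fin M → EuclideanSpace ℝ (Fin n))
    (hhat0 : ∀ m, θhat 0 m = θ 1)
    (hhat : ∀ k : ℤ, 1 ≤ k → ∀ m : Fin M,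
      (m ∈ Mc k → θhat k m = θhat (k - 1) m) ∧ (m ∉ Mc k → θhat k m = θ k))
    (hupd : ∀ k : ℤ, 1 ≤ k →
      θ (k + 1) = θ k - α • ∑ m, gradient (Lf m) (θhat k m))
    (htrig : ∀ k : ℤ, 1 ≤ k → ∀ m ∈ Mc k,
      ‖gradient (Lf m) (θhat k m) - gradient (Lf m) (θ k)‖ ^ 2
        ≤ (1 / (α ^ 2 * (M : ℝ) ^ 2)) *
            ∑ d ∈ Finset.Icc 1 D, ξ d * ‖θ (k + 1 - (d : ℤ)) - θ (k - (d : ℤ))‖ ^ 2)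
    (V : ℤ → ℝ)
    (hV : ∀ k : ℤ, V k = (∑ m, Lf m (θ k)) - Lstar
      + ∑ d ∈ Finset.Icc 1 D, β d * ‖θ (k + 1 - (d : ℤ)) - θ (k - (d : ℤ))‖ ^ 2) :
    (∀ k : ℤ, 1 ≤ k →
      V (k + 1) ≤ (1 - (1 - Real.sqrt ((D : ℝ) * ξ0)) / (L / μ)) * V k)
    ∧ (∀ K : ℕ, 1 ≤ K →
      (∑ m, Lf m (θ (K : ℤ))) - Lstar
        ≤ (1 - (1 - Real.sqrt ((D : ℝ) * ξ0)) / (L / μ)) ^ (K - 1) * V 1) := by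
  classical
  have hDr : (1 : ℝ) ≤ D := by exact_mod_cast hD
  have hMr : (1 : ℝ) ≤ M := by exact_mod_cast hM
  have hDξ : 0 < (D : ℝ) * ξ0 := by positivity
  have hDξ1 : (D : ℝ) * ξ0 < 1 := by
    rw [lt_div_iff₀ (by linarith)] at hξ0D
    linarith
  set s := Real.sqrt ((D : ℝ) * ξ0) with hs
  have hs0 : 0 < s := Real.sqrt_pos.2 hDξ
  have hss : s ^ 2 = D * ξ0 := Real.sq_sqrt hDξ.le
  have hs1 : s < 1 := by nlinarith
  have hα0 : 0 < α := by rw [hα]; apply div_pos <;> linarith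
  have hαL : α * L = 1 - s := by rw [hα]; field_simp
  have hc : (1 - s) / (L / μ) = α * μ := by rw [hα]; field_simp
  rw [hc]
  have hDμ : D * μ ≤ L := by rwa [le_div_iff₀ hμ] at hκ
  have hcD : α * μ * D ≤ 1 - s := by
    rw [← hαL]
    nlinarith
  have hc1 : α * μ ≤ 1 := by
    have : 0 < α * μ := by positivity
    nlinarith
  have hβ' : ∀ d ∈ Finset.Icc 1 D, β (d + 1) = ((D : ℝ) - d) * ξ0 / (2 * α * s) := by
    intro d hd
    rw [Finset.mem_Icc] at hd
    rcases hd.2.eq_or_lt with h | h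
    · rw [h, hβD]; simp
    · rw [hβ (d + 1) (Finset.mem_Icc.2 ⟨by omega, by omega⟩)]
      push_cast
      ring
  have hβ0 : ∀ d ∈ Finset.Icc 1 D, 0 ≤ β d := by
    intro d hd
    rw [hβ d hd]
    rw [Finset.mem_Icc] at hd
    have : (d : ℝ) ≤ D := by exact_mod_cast hd.2
    apply div_nonneg
    · apply mul_nonneg _ hξ0.le
      linarith
    · positivity
  have hβ1 : β 1 = s / (2 * α) := by
    rw [hβ 1 (Finset.mem_Icc.2 ⟨le_rfl, hD⟩)]
    rw [div_eq_div_iff (by positivity) (by positivity)]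
    push_cast
    linear_combination (-2 * α) * hss
  have hβstep : ∀ d ∈ Finset.Icc 1 D,
      β (d + 1) + ξ0 / (2 * α) ≤ (1 - α * μ) * β d := by
    intro d hd
    rw [hβ' d hd, hβ d hd]
    rw [Finset.mem_Icc] at hd
    have hd1 : (1 : ℝ) ≤ d := by exact_mod_cast hd.1
    have e : (1 - α * μ) * (((D : ℝ) - d + 1) * ξ0 / (2 * α * s))
        - (((D : ℝ) - d) * ξ0 / (2 * α * s) + ξ0 / (2 * α))
        = (1 - s - α * μ * (D - d + 1)) * (ξ0 / (2 * α * s)) := by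
      field_simp
      ring
    have h1 : 0 ≤ 1 - s - α * μ * ((D : ℝ) - d + 1) := by
      have : 0 < α * μ := by positivity
      nlinarith
    have h2 : 0 ≤ ξ0 / (2 * α * s) := by positivity
    have := mul_nonneg h1 h2
    linarith
  have hstep : ∀ k : ℤ, 1 ≤ k → V (k + 1) ≤ (1 - α * μ) * V k := by
    intro k hk
    set g := gradient (fun z => ∑ m, Lf m z) (θ k) with hg
    set G := ∑ m, gradient (Lf m) (θhat k m) with hG
    set S := ∑ d ∈ Finset.Icc 1 D, ξ d * ‖θ (k + 1 - (d : ℤ)) - θ (k - (d : ℤ))‖ ^ 2 with hS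
    have hS0 : 0 ≤ S := Finset.sum_nonneg fun d hd => by
      rw [hξ d hd]; positivity
    have hS' : S = ∑ d ∈ Finset.Icc 1 D,
        ξ0 * ‖θ (k + 1 - (d : ℤ)) - θ (k - (d : ℤ))‖ ^ 2 :=
      Finset.sum_congr rfl fun d hd => by rw [hξ d hd]
    have herr : ‖G - g‖ ≤ Real.sqrt S / α := by
      rw [hg, lag_gradient_sum Lf hdiff, hG, ← Finset.sum_sub_distrib]
      have hb : ∀ m ∈ (Finset.univ : Finset (Fin M)),
          ‖gradient (Lf m) (θhat k m) - gradient (Lf m) (θ k)‖ ≤ Real.sqrt S / (α * M) := by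
        intro m _
        by_cases hm : m ∈ Mc k
        · apply le_of_sq_le_sq _ (by positivity)
          rw [div_pow, Real.sq_sqrt hS0, mul_pow]
          refine (htrig k hk m hm).trans (le_of_eq ?_)
          ring
        · rw [(hhat k hk m).2 hm, sub_self, norm_zero]
          positivity
      refine (norm_sum_le_of_le _ hb).trans (le_of_eq ?_)
      rw [Finset.sum_const, Finset.card_univ, Fintype.card_fin, nsmul_eq_mul]
      field_simp
    have herr2 : α ^ 2 * ‖G - g‖ ^ 2 ≤ S := by
      have h1 : α * ‖G - g‖ ≤ Real.sqrt S := by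
        rw [le_div_iff₀ hα0] at herr; linarith
      have h2 := pow_le_pow_left₀ (by positivity) h1 2
      rwa [mul_pow, Real.sq_sqrt hS0] at h2
    have hdesc := lag_descent (fun z => ∑ m, Lf m z)
      (Differentiable.fun_sum fun m _ => hdiff m) L hsmooth (θ k) (-(α • G))
    rw [← sub_eq_add_neg, ← hupd k hk, ← hg, norm_neg, norm_smul, inner_neg_right,
      inner_smul_right, Real.norm_eq_abs, abs_of_pos hα0] at hdesc
    have hΔ : ‖θ (k + 1) - θ k‖ ^ 2 = α ^ 2 * ‖G‖ ^ 2 := by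
      rw [hupd k hk, sub_sub_cancel_left, norm_neg, norm_smul, Real.norm_eq_abs,
        abs_of_pos hα0, mul_pow]
    have hexp := norm_sub_sq_real G g
    rw [real_inner_comm] at hexp
    have hpl := hPL (θ k)
    rw [← hg] at hpl
    rw [hV (k + 1), hV k, lag_sum_shift]
    rw [hβD]
    have hsh : ∑ d ∈ Finset.Icc 1 D, β (d + 1) *
          ‖θ (k + 1 + 1 - ((d + 1 : ℕ) : ℤ)) - θ (k + 1 - ((d + 1 : ℕ) : ℤ))‖ ^ 2
        = ∑ d ∈ Finset.Icc 1 D, β (d + 1) * ‖θ (k + 1 - (d : ℤ)) - θ (k - (d : ℤ))‖ ^ 2 := by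
      refine Finset.sum_congr rfl fun d _ => ?_
      have e1 : k + 1 + 1 - ((d + 1 : ℕ) : ℤ) = k + 1 - d := by push_cast; ring
      have e2 : k + 1 - ((d + 1 : ℕ) : ℤ) = k - d := by push_cast; ring
      rw [e1, e2]
    have e3 : k + 1 + 1 - ((1 : ℕ) : ℤ) = k + 1 := by push_cast; ring
    have e4 : k + 1 - ((1 : ℕ) : ℤ) = k := by push_cast; ring
    rw [hsh, e3, e4, hΔ, hβ1]
    have hsum : ∑ d ∈ Finset.Icc 1 D, β (d + 1) * ‖θ (k + 1 - (d : ℤ)) - θ (k - (d : ℤ))‖ ^ 2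
        + S / (2 * α) ≤ (1 - α * μ) *
        ∑ d ∈ Finset.Icc 1 D, β d * ‖θ (k + 1 - (d : ℤ)) - θ (k - (d : ℤ))‖ ^ 2 := by
      rw [hS', Finset.sum_div, ← Finset.sum_add_distrib, Finset.mul_sum]
      refine Finset.sum_le_sum fun d hd => ?_
      have := mul_le_mul_of_nonneg_right (hβstep d hd)
        (sq_nonneg ‖θ (k + 1 - (d : ℤ)) - θ (k - (d : ℤ))‖)
      refine le_trans (le_of_eq ?_) (this.trans (le_of_eq ?_)) <;> ring
    have hs2 : s / (2 * α) * (α ^ 2 * ‖G‖ ^ 2) = s * α / 2 * ‖G‖ ^ 2 := by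
      field_simp
    have hSα : α / 2 * ‖G - g‖ ^ 2 ≤ S / (2 * α) := by
      rw [le_div_iff₀ (by positivity)]
      linarith
    have hpl2 := mul_le_mul_of_nonneg_left hpl (show 0 ≤ α / 2 by positivity)
    have hLG : L / 2 * (α * ‖G‖) ^ 2 = (1 - s) * α / 2 * ‖G‖ ^ 2 := by
      rw [← hαL]; ring
    rw [hLG] at hdesc
    rw [hexp] at hSα
    rw [hs2]
    linarith
  refine ⟨hstep, ?_⟩
  have hVK : ∀ j : ℕ, V ((j : ℤ) + 1) ≤ (1 - α * μ) ^ j * V 1 := by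
    intro j
    induction j with
    | zero => simp
    | succ j ih =>
      have h1 := hstep ((j : ℤ) + 1) (by omega)
      have h2 := mul_le_mul_of_nonneg_left ih (show 0 ≤ 1 - α * μ by linarith)
      push_cast
      rw [pow_succ']
      linarith
  intro K hK
  obtain ⟨j, rfl⟩ : ∃ j, K = j + 1 := ⟨K - 1, by omega⟩
  have h1 := hVK j
  rw [hV ((j : ℤ) + 1)] at h1
  have h2 : 0 ≤ ∑ d ∈ Finset.Icc 1 D,
      β d * ‖θ ((j : ℤ) + 1 + 1 - (d : ℤ)) - θ ((j : ℤ) + 1 - (d : ℤ))‖ ^ 2 :=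
    Finset.sum_nonneg fun d hd => mul_nonneg (hβ0 d hd) (sq_nonneg _)
  rw [Nat.add_sub_cancel]
  push_cast
  linarith
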